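/- Let (J, B) be a pseudo-euclidean Jordan algebra. Then: (1) the B-orthogonal complement of the annihilator Ann(J) equals J² (the linear span of all products xy, x, y ∈ J); (2) the B-orthogonal complement of the center Z(J) equals the linear span (J, J, J) of all associators (x, y, z) = (xy)z − x(yz). -/

import Mathlib

/-- For a nondegenerate symmetric form on a finite-dimensional space, the span of a set `S` is the
set of vectors orthogonal to everything that is orthogonal to `S`. -/
theorem mem_span_iff_forall_orthogonal {K V : Type*} [Field K] [AddCommGroup V] [Module K V]
    [FiniteDimensional K V] (B : V →ₗ[K] V →ₗ[K] K) (hsymm : ∀ x y : V, B x y = B y x)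
    (hnondeg : ∀ x : V, (∀ y : V, B x y = 0) → x = 0) (S : Set V) (x : V) :
    x ∈ Submodule.span K S ↔ ∀ c : V, (∀ s ∈ S, B s c = 0) → B x c = 0 := by
  have hrefl : LinearMap.IsRefl B := fun a b h => by rw [hsymm, h]
  have hB : LinearMap.Nondegenerate B :=
    ⟨hnondeg, fun y hy => hnondeg y fun z => by rw [hsymm, hy]⟩
  have hperp : ∀ c : V, (∀ s ∈ S, B s c = 0) ↔
      c ∈ LinearMap.BilinForm.orthogonal B (Submodule.span K S) := fun c => by
    refine ⟨fun h n hn => ?_, fun h s hs => h s (Submodule.subset_span hs)⟩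
    have hle : Submodule.span K S ≤ LinearMap.ker (B.flip c) := Submodule.span_le.2 h
    exact hle hn
  rw [← LinearMap.BilinForm.orthogonal_orthogonal hB hrefl (Submodule.span K S)]
  simp only [hperp, hsymm x,
    LinearMap.BilinForm.mem_orthogonal_iff (N := LinearMap.BilinForm.orthogonal B _)]


/-- In a pseudo-euclidean Jordan algebra `(J, B)`:
(1) the `B`-orthogonal of the annihilator `Ann(J)` equals `J²`;
(2) the `B`-orthogonal of the center `Z(J)` equals the span of all associators. -/
theorem perp_ann_eq_square_and_perp_center_eq_associators
    {K : Type*} [Field K] [CharZero K]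
    {J : Type*} [NonUnitalNonAssocCommRing J] [Module K J]
    [SMulCommClass K J J] [IsScalarTower K J J] [FiniteDimensional K J]
    (hjordan : ∀ x y : J, (x * y) * (x * x) = x * (y * (x * x)))
    (B : J →ₗ[K] J →ₗ[K] K)
    (hsymm : ∀ x y : J, B x y = B y x)
    (hnondeg : ∀ x : J, (∀ y : J, B x y = 0) → x = 0)
    (hassoc : ∀ x y z : J, B (x * y) z = B x (y * z)) :
    -- (1) `Ann(J)⊥ = J²`
    (∀ x : J,
      (∀ a : J, (∀ y : J, a * y = 0) → B x a = 0) ↔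
        x ∈ Submodule.span K {z : J | ∃ u v : J, z = u * v}) ∧
    -- (2) `Z(J)⊥ = (J, J, J)`
    (∀ x : J,
      (∀ c : J, (∀ y z : J,
          (c * y) * z = c * (y * z) ∧ (y * c) * z = y * (c * z) ∧
            (y * z) * c = y * (z * c)) → B x c = 0) ↔
        x ∈ Submodule.span K {w : J | ∃ u v t : J, w = (u * v) * t - u * (v * t)}) := by
  have ext_left : ∀ p q : J, (∀ u : J, B u p = B u q) → p = q := fun p q h =>
    sub_eq_zero.1 <| hnondeg _ fun y => by rw [hsymm, map_sub, h, sub_self]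
  refine ⟨fun x => ?_, fun x => ?_⟩ <;>
    rw [mem_span_iff_forall_orthogonal B hsymm hnondeg] <;>
    refine forall_congr' fun c => imp_congr_left ?_
  · constructor
    · rintro h _ ⟨u, v, rfl⟩
      rw [hassoc, mul_comm, h, map_zero]
    · refine fun h y => ext_left _ _ fun u => ?_
      rw [mul_comm, ← hassoc, h _ ⟨u, y, rfl⟩, map_zero]
  · have key : ∀ u v t : J,
        B ((u * v) * t - u * (v * t)) c = B u (v * (t * c)) - B u ((v * t) * c) := fun u v t => by
      rw [map_sub, LinearMap.sub_apply, hassoc, hassoc, hassoc]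
    constructor
    · rintro h _ ⟨u, v, t, rfl⟩
      rw [key, (h v t).2.2, sub_self]
    · intro h
      have hc : ∀ y z : J, (y * z) * c = y * (z * c) := fun y z => ext_left _ _ fun u =>
        (sub_eq_zero.1 ((key u y z).symm.trans (h _ ⟨u, y, z, rfl⟩))).symm
      refine fun y z => ⟨?_, ?_, hc y z⟩
      · rw [mul_comm c y, mul_comm _ z, ← hc, mul_comm c, mul_comm z]
      · rw [mul_comm _ z, ← hc, mul_comm c, ← hc, mul_comm z]
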